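/- Let W : ℝ → ℝ be bounded, of bounded variation, even, with W(x) = 0 for |x| ≥ 1. Let k ≥ 0 be an integer. Then there exists C > 0, depending only on W and k, such that for every integer T ≥ 2, every b ∈ (0, π/2), and every ω ∈ [0, 2π]: (i) if k is even, (2π/T) ∑_{s=0}^{T−1} W_b(ω − u_s)² · (ω − u_s)^k ≤ b^{k−1} · ∫_ℝ W(α)² α^k dα + C/(T·b²); (ii) if k is odd, |(2π/T) ∑_{s=0}^{T−1} W_b(ω − u_s)² · (ω − u_s)^k| ≤ C/(T·b²). -/

import Mathlib

/-- The periodized smoothing kernel `W_b(x) = (1/b) ∑_{k ∈ ℤ} W((x + 2kπ)/b)`. -/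
noncomputable def Wper (W : ℝ → ℝ) (b x : ℝ) : ℝ :=
  (1 / b) * ∑' k : ℤ, W ((x + 2 * (k : ℝ) * Real.pi) / b)

/-!
On `[-π, π]` the periodized kernel is `b⁻¹ W(· / b)`, so with `g x = W(x)² x ^ k` the sum is
`b ^ (k - 2) ∑_s f (ω - u_s)` for `f = g(· / b)`. As `f` vanishes outside `(-π, π)`, each
`f (ω - u_s)` is the sum of `f` over a whole residue class of the grid `ω - (2π / T) ℤ`; hence
`(2π / T) ∑_s f (ω - u_s)` is a Riemann sum of `f` over the entire line, which misses `∫ f = b ∫ g`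
by at most `2π / T` times the total variation of `f`, and that is at most the variation of `g`.
-/

open MeasureTheory Set

section BoundedVariation

variable {α : Type*} [LinearOrder α]

lemma sum_eVariationOn_Icc_le {E : Type*} [PseudoEMetricSpace E] (f : α → E) {u : ℤ → α}
    (hu : Monotone u) (s : Finset ℤ) :
    ∑ n ∈ s, eVariationOn f (Icc (u n) (u (n + 1))) ≤
      eVariationOn f (⋃ n ∈ s, Icc (u n) (u (n + 1))) := by
  induction s using Finset.induction_on_max with
  | empty => simp
  | insert a s hs ih =>
    have hord : ∀ x ∈ ⋃ n ∈ s, Icc (u n) (u (n + 1)), ∀ y ∈ Icc (u a) (u (a + 1)), x ≤ y := by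
      intro x hx y hy
      obtain ⟨n, hn, hxn⟩ := mem_iUnion₂.1 hx
      exact hxn.2.trans ((hu (hs n hn)).trans hy.1)
    rw [Finset.sum_insert fun ha ↦ (hs a ha).false, Finset.set_biUnion_insert, add_comm, union_comm]
    exact (add_le_add_left ih _).trans (eVariationOn.add_le_union f hord)

lemma tsum_eVariationOn_Icc_le {E : Type*} [PseudoEMetricSpace E] (f : α → E) {u : ℤ → α}
    (hu : Monotone u) :
    ∑' n, eVariationOn f (Icc (u n) (u (n + 1))) ≤ eVariationOn f univ :=
  ENNReal.summable.tsum_le_of_sum_le fun s ↦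
    (sum_eVariationOn_Icc_le f hu s).trans (eVariationOn.mono f (subset_univ _))

lemma boundedVariationOn_pow {f : α → ℝ} {s : Set α} (hf : BoundedVariationOn f s) (k : ℕ) :
    BoundedVariationOn (fun x ↦ f x ^ k) s := by
  induction k with
  | zero =>
    have hconst : ((fun x ↦ f x ^ 0) '' s).Subsingleton := by
      rintro _ ⟨x, -, rfl⟩ _ ⟨y, -, rfl⟩
      simp only [pow_zero]
    exact (eVariationOn.constant_on hconst).trans_ne ENNReal.zero_ne_top
  | succ k ih => simpa only [pow_succ] using ih.fun_mul hf

lemma boundedVariationOn_mul_pow_of_eq_zero {w : ℝ → ℝ} (hw : BoundedVariationOn w univ)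
    (hsupp : ∀ x, 1 ≤ |x| → w x = 0) (k : ℕ) :
    BoundedVariationOn (fun x ↦ w x * x ^ k) univ := by
  let clip (x : ℝ) : ℝ := projIcc (-1) 1 (by norm_num) x
  have hclip : BoundedVariationOn clip univ := by
    refine MonotoneOn.boundedVariationOn (C := 1) (fun x _ y _ hxy ↦ ?_)
      fun x _ ↦ abs_le.2 (projIcc (-1 : ℝ) 1 (by norm_num) x).2
    exact monotone_projIcc _ hxy
  have hmul : (fun x ↦ w x * x ^ k) = fun x ↦ w x * clip x ^ k := by
    ext x
    rcases le_or_gt 1 |x| with hx | hx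
    · simp only [hsupp x hx, zero_mul]
    · simp only [clip, projIcc_of_mem _ (abs_le.1 hx.le)]
  rw [hmul]
  exact hw.fun_mul (boundedVariationOn_pow hclip k)

lemma integrable_of_locallyBoundedVariationOn {f : ℝ → ℝ}
    (hf : LocallyBoundedVariationOn f univ) {a b : ℝ} (hsupp : Function.support f ⊆ Ioc a b) :
    Integrable f := by
  obtain ⟨p, q, hp, hq, rfl⟩ := hf.exists_monotoneOn_sub_monotoneOn
  rw [← integrableOn_iff_integrable_of_support_subset hsupp]
  have hint : IntervalIntegrable (p - q) volume a b :=
    (hp.mono (subset_univ _)).intervalIntegrable.sub (hq.mono (subset_univ _)).intervalIntegrable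
  exact hint.1

end BoundedVariation

section RiemannSum

variable {E : Type*} [NormedAddCommGroup E] [NormedSpace ℝ E] [CompleteSpace E] {f : ℝ → E}

lemma norm_smul_sub_integral_le_mul_eVariationOn {a b : ℝ} (hab : a ≤ b)
    (hf : BoundedVariationOn f (Icc a b)) (hint : IntervalIntegrable f volume a b) :
    ‖(b - a) • f a - ∫ x in a..b, f x‖ ≤ (b - a) * (eVariationOn f (Icc a b)).toReal := by
  rw [← intervalIntegral.integral_const, ← intervalIntegral.integral_sub intervalIntegrable_const
    hint, mul_comm, ← abs_of_nonneg (sub_nonneg.2 hab)]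
  refine intervalIntegral.norm_integral_le_of_norm_le_const fun x hx ↦ ?_
  rw [uIoc_of_le hab] at hx
  rw [← dist_eq_norm]
  exact hf.dist_le (left_mem_Icc.2 hab) (Ioc_subset_Icc_self hx)

lemma summable_and_norm_tsum_intCast_sub_integral_le (hf : BoundedVariationOn f univ)
    (hint : Integrable f) :
    (Summable fun n : ℤ ↦ f n) ∧
      ‖∑' n : ℤ, f n - ∫ x, f x‖ ≤ (eVariationOn f univ).toReal := by
  let v (n : ℤ) := eVariationOn f (Icc (n : ℝ) ((n + 1 : ℤ) : ℝ))
  have hv : ∑' n, v n ≤ eVariationOn f univ := tsum_eVariationOn_Icc_le f Int.cast_mono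
  have hv_sum : HasSum (fun n ↦ (v n).toReal) (∑' n, (v n).toReal) :=
    (ENNReal.summable_toReal (ne_top_of_le_ne_top hf hv)).hasSum
  have hcell (n : ℤ) : ‖f n - ∫ x in (n : ℝ)..(n + 1), f x‖ ≤ (v n).toReal := by
    simpa [v] using norm_smul_sub_integral_le_mul_eVariationOn (le_add_of_nonneg_right zero_le_one)
      (hf.mono (subset_univ _)) (hint.intervalIntegrable (a := (n : ℝ)) (b := n + 1))
  have hcells : HasSum (fun n : ℤ ↦ ∫ x in (n : ℝ)..(n + 1), f x) (∫ x, f x) := by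
    simpa only [zero_add] using hint.hasSum_intervalIntegral 0
  have hsum : Summable fun n : ℤ ↦ f n := by
    simpa only [sub_add_cancel] using
      (Summable.of_norm_bounded hv_sum.summable hcell).add hcells.summable
  refine ⟨hsum, ?_⟩
  calc ‖∑' n : ℤ, f n - ∫ x, f x‖
      = ‖∑' n : ℤ, (f n - ∫ x in (n : ℝ)..(n + 1), f x)‖ := by
        rw [hsum.tsum_sub hcells.summable, hcells.tsum_eq]
    _ ≤ ∑' n, (v n).toReal := tsum_of_norm_bounded hv_sum hcell
    _ = (∑' n, v n).toReal := (ENNReal.tsum_toReal_eq fun n ↦ hf.mono (subset_univ _)).symm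
    _ ≤ (eVariationOn f univ).toReal := ENNReal.toReal_mono hf hv

lemma summable_and_norm_smul_tsum_sub_integral_le (hf : BoundedVariationOn f univ)
    (hint : Integrable f) (a : ℝ) {h : ℝ} (hh : 0 < h) :
    (Summable fun n : ℤ ↦ f (a - h * n)) ∧
      ‖h • ∑' n : ℤ, f (a - h * n) - ∫ x, f x‖ ≤ h * (eVariationOn f univ).toReal := by
  let φ (t : ℝ) : ℝ := a - h * t
  have hφ : AntitoneOn φ univ := fun x _ y _ hxy ↦
    sub_le_sub_left (mul_le_mul_of_nonneg_left hxy hh.le) a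
  have hvar : eVariationOn (f ∘ φ) univ ≤ eVariationOn f univ :=
    eVariationOn.comp_le_of_antitoneOn f φ hφ (mapsTo_univ _ _)
  have hφint : ∫ t, f (φ t) = h⁻¹ • ∫ x, f x := by
    rw [Measure.integral_comp_mul_left (fun x ↦ f (a - x)), integral_sub_left_eq_self f volume a,
      abs_of_pos (inv_pos.2 hh)]
  obtain ⟨hsum, hbound⟩ := summable_and_norm_tsum_intCast_sub_integral_le (f := f ∘ φ)
    (ne_top_of_le_ne_top hf hvar) ((hint.comp_sub_left a).comp_mul_left' hh.ne')
  refine ⟨hsum, ?_⟩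
  calc ‖h • ∑' n : ℤ, f (φ n) - ∫ x, f x‖
      = h * ‖∑' n : ℤ, f (φ n) - ∫ t, f (φ t)‖ := by
        rw [hφint, ← norm_smul_of_nonneg hh.le, smul_sub, smul_inv_smul₀ hh.ne']
    _ ≤ h * (eVariationOn f univ).toReal :=
        mul_le_mul_of_nonneg_left (hbound.trans (ENNReal.toReal_mono hf hvar)) hh.le

end RiemannSum

section Periodization

lemma tsum_add_int_mul_eq_of_abs_le {M : Type*} [AddCommMonoid M] [TopologicalSpace M]
    {f : ℝ → M} {r x : ℝ} (hf : ∀ y, r ≤ |y| → f y = 0) (hx : |x| ≤ r) :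
    ∑' m : ℤ, f (x + m * (2 * r)) = f x := by
  rw [tsum_eq_single 0 fun m hm ↦ hf _ ?_, Int.cast_zero, zero_mul, add_zero]
  have hr : 0 ≤ 2 * r := by linarith [abs_nonneg x]
  have hshift : 2 * r ≤ |(m : ℝ) * (2 * r)| := by
    rw [abs_mul, abs_of_nonneg hr]
    exact le_mul_of_one_le_left hr (by exact_mod_cast Int.one_le_abs hm)
  have htri : |(m : ℝ) * (2 * r)| ≤ |x + m * (2 * r)| + |x| := by
    simpa only [add_sub_cancel_left] using abs_sub (x + m * (2 * r)) x
  linarith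

lemma tsum_int_eq_sum_range_tsum {R : Type*} [AddCommGroup R] [UniformSpace R]
    [IsUniformAddGroup R] [CompleteSpace R] [T0Space R] {f : ℤ → R} (hf : Summable f) {T : ℕ}
    (hT : T ≠ 0) : ∑' n, f n = ∑ s ∈ Finset.range T, ∑' m : ℤ, f (m * T + s) := by
  have : NeZero T := ⟨hT⟩
  let e : Fin T × ℤ ≃ ℤ := (Equiv.prodComm _ _).trans (Int.divModEquiv T).symm
  rw [← e.tsum_eq f, Summable.tsum_prod (f := fun p ↦ f (e p)) (e.summable_iff.2 hf),
    tsum_fintype, ← Fin.sum_univ_eq_sum_range (fun s ↦ ∑' m : ℤ, f (m * T + s))]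
  rfl

/-- The values `u s`, `s < T`, are representatives of the grid points `2πs / T` modulo `2π` that lie
at distance at most `π` from `ω`; the values `u s` with `T ≤ s` are arbitrary. -/
def IsGridRepresentative (T : ℕ) (ω : ℝ) (u : ℕ → ℝ) : Prop :=
  ∀ s < T, (∃ m : ℤ, u s = 2 * Real.pi * s / T + 2 * (m : ℝ) * Real.pi) ∧ |ω - u s| ≤ Real.pi

lemma sum_grid_representatives_eq_tsum {R : Type*} [AddCommGroup R] [UniformSpace R]
    [IsUniformAddGroup R] [CompleteSpace R] [T0Space R] {f : ℝ → R}
    (hf : ∀ x, Real.pi ≤ |x| → f x = 0) {T : ℕ} (hT : 0 < T) {ω : ℝ} {u : ℕ → ℝ}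
    (hu : IsGridRepresentative T ω u)
    (hsum : Summable fun n : ℤ ↦ f (ω - 2 * Real.pi / T * n)) :
    ∑ s ∈ Finset.range T, f (ω - u s) = ∑' n : ℤ, f (ω - 2 * Real.pi / T * n) := by
  rw [tsum_int_eq_sum_range_tsum hsum hT.ne']
  refine Finset.sum_congr rfl fun s hs ↦ ?_
  obtain ⟨⟨m₀, hm₀⟩, hle⟩ := hu s (Finset.mem_range.1 hs)
  rw [← tsum_add_int_mul_eq_of_abs_le hf hle, ← (Equiv.subLeft m₀).tsum_eq]
  refine tsum_congr fun m ↦ congrArg f ?_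
  rw [hm₀, Equiv.subLeft_apply]
  push_cast
  field_simp
  ring

lemma norm_sum_grid_representatives_sub_integral_le {E : Type*} [NormedAddCommGroup E]
    [NormedSpace ℝ E] [CompleteSpace E] {f : ℝ → E} (hBV : BoundedVariationOn f univ)
    (hint : Integrable f) (hf : ∀ x, Real.pi ≤ |x| → f x = 0) {T : ℕ} (hT : 0 < T) {ω : ℝ}
    {u : ℕ → ℝ} (hu : IsGridRepresentative T ω u) :
    ‖(2 * Real.pi / T) • ∑ s ∈ Finset.range T, f (ω - u s) - ∫ x, f x‖ ≤
      2 * Real.pi / T * (eVariationOn f univ).toReal := by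
  obtain ⟨hsum, hbound⟩ := summable_and_norm_smul_tsum_sub_integral_le hBV hint ω
    (h := 2 * Real.pi / T) (by positivity)
  rwa [sum_grid_representatives_eq_tsum hf hT hu hsum]

lemma comp_div_eq_zero_of_le_abs {M : Type*} [Zero M] {f : ℝ → M}
    (hf : ∀ x, 1 ≤ |x| → f x = 0) {b : ℝ} (hb : 0 < b) {x : ℝ} (hx : b ≤ |x|) : f (x / b) = 0 :=
  hf _ (by rwa [abs_div, abs_of_pos hb, one_le_div hb])

lemma norm_sum_comp_div_sub_integral_le {E : Type*} [NormedAddCommGroup E] [NormedSpace ℝ E]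
    [CompleteSpace E] {g : ℝ → E} (hBV : BoundedVariationOn g univ) (hint : Integrable g)
    (hg : ∀ x, 1 ≤ |x| → g x = 0) {b : ℝ} (hb : 0 < b) (hbπ : b ≤ Real.pi) {T : ℕ} (hT : 0 < T)
    {ω : ℝ} {u : ℕ → ℝ} (hu : IsGridRepresentative T ω u) :
    ‖(2 * Real.pi / T) • ∑ s ∈ Finset.range T, g ((ω - u s) / b) - b • ∫ x, g x‖ ≤
      2 * Real.pi / T * (eVariationOn g univ).toReal := by
  have hvar : eVariationOn (g ∘ (· / b)) univ ≤ eVariationOn g univ :=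
    eVariationOn.comp_le_of_monotoneOn g _
      (fun x _ y _ hxy ↦ div_le_div_of_nonneg_right hxy hb.le) (mapsTo_univ _ _)
  have hgrid := norm_sum_grid_representatives_sub_integral_le (f := g ∘ (· / b))
    (ne_top_of_le_ne_top hBV hvar) (hint.comp_div hb.ne')
    (fun x hx ↦ comp_div_eq_zero_of_le_abs hg hb (hbπ.trans hx)) hT hu
  simp only [Function.comp_apply, Measure.integral_comp_div, abs_of_pos hb] at hgrid
  exact hgrid.trans (by gcongr)

end Periodization

section Kernel

variable {W : ℝ → ℝ} {b : ℝ}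

lemma Wper_eq_of_abs_le_pi (hsupp : ∀ x : ℝ, 1 ≤ |x| → W x = 0) (hb : 0 < b) (hbπ : b ≤ Real.pi)
    {x : ℝ} (hx : |x| ≤ Real.pi) : Wper W b x = 1 / b * W (x / b) := by
  rw [Wper, ← tsum_add_int_mul_eq_of_abs_le (f := fun y ↦ W (y / b))
    (fun y hy ↦ comp_div_eq_zero_of_le_abs hsupp hb (hbπ.trans hy)) hx]
  simp only [mul_left_comm, mul_assoc]

lemma sq_Wper_mul_pow_eq (hsupp : ∀ x : ℝ, 1 ≤ |x| → W x = 0) (hb : 0 < b) (hbπ : b ≤ Real.pi)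
    {x : ℝ} (hx : |x| ≤ Real.pi) (k : ℕ) :
    Wper W b x ^ 2 * x ^ k = b ^ k / b ^ 2 * (W (x / b) ^ 2 * (x / b) ^ k) := by
  rw [Wper_eq_of_abs_le_pi hsupp hb hbπ hx, div_pow x b k]
  field_simp

lemma integral_sq_mul_pow_eq_zero_of_even_of_odd (hW : ∀ x, W (-x) = W x) {k : ℕ} (hk : Odd k) :
    ∫ x, W x ^ 2 * x ^ k = 0 := by
  have hneg := integral_neg_eq_self (fun x ↦ W x ^ 2 * x ^ k) volume
  simp only [hW, hk.neg_pow, mul_neg, integral_neg] at hneg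
  linarith

end Kernel

theorem kernel_riemann_sum_C_general (W : ℝ → ℝ) (k : ℕ) (hBV : BoundedVariationOn W univ)
    (hsupp : ∀ x : ℝ, 1 ≤ |x| → W x = 0) :
    ∃ C > (0 : ℝ), ∀ T : ℕ, 0 < T → ∀ b : ℝ, 0 < b → b ≤ Real.pi → ∀ ω : ℝ, ∀ u : ℕ → ℝ,
      IsGridRepresentative T ω u →
      |(2 * Real.pi / T) * ∑ s ∈ Finset.range T, (Wper W b (ω - u s)) ^ 2 * (ω - u s) ^ k -
          b ^ ((k : ℤ) - 1) * ∫ x, (W x) ^ 2 * x ^ k| ≤ C * b ^ k / (T * b ^ 2) := by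
  let g (x : ℝ) : ℝ := W x ^ 2 * x ^ k
  have hg_zero (x : ℝ) (hx : 1 ≤ |x|) : g x = 0 := by simp [g, hsupp x hx]
  have hg : BoundedVariationOn g univ :=
    boundedVariationOn_mul_pow_of_eq_zero (boundedVariationOn_pow hBV 2)
      (fun x hx ↦ by simp [hsupp x hx]) k
  have hg_int : Integrable g := by
    refine integrable_of_locallyBoundedVariationOn hg.locallyBoundedVariationOn
      (a := -1) (b := 1) fun x hx ↦ ?_
    exact Ioo_subset_Ioc_self (abs_lt.1 (not_le.1 (mt (hg_zero x) hx)))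
  refine ⟨2 * Real.pi * (eVariationOn g univ).toReal + 1, by positivity, ?_⟩
  intro T hT b hb hbπ ω u hu
  have hsum : ∑ s ∈ Finset.range T, Wper W b (ω - u s) ^ 2 * (ω - u s) ^ k =
      b ^ k / b ^ 2 * ∑ s ∈ Finset.range T, g ((ω - u s) / b) := by
    rw [Finset.mul_sum]
    exact Finset.sum_congr rfl fun s hs ↦
      sq_Wper_mul_pow_eq hsupp hb hbπ (hu s (Finset.mem_range.1 hs)).2 k
  have hpow : b ^ ((k : ℤ) - 1) = b ^ k / b ^ 2 * b := by
    rw [zpow_sub₀ hb.ne', zpow_natCast, zpow_one]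
    field_simp
  calc |2 * Real.pi / T * ∑ s ∈ Finset.range T, Wper W b (ω - u s) ^ 2 * (ω - u s) ^ k -
        b ^ ((k : ℤ) - 1) * ∫ x, g x|
      = |b ^ k / b ^ 2 *
          (2 * Real.pi / T * ∑ s ∈ Finset.range T, g ((ω - u s) / b) - b * ∫ x, g x)| := by
        rw [hsum, hpow]
        ring_nf
    _ = b ^ k / b ^ 2 *
          |2 * Real.pi / T * ∑ s ∈ Finset.range T, g ((ω - u s) / b) - b * ∫ x, g x| := by
        rw [abs_mul, abs_of_pos (by positivity)]
    _ ≤ b ^ k / b ^ 2 * (2 * Real.pi / T * (eVariationOn g univ).toReal) := by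
        gcongr
        exact norm_sum_comp_div_sub_integral_le hg hg_int hg_zero hb hbπ hT hu
    _ = 2 * Real.pi * (eVariationOn g univ).toReal * b ^ k / (T * b ^ 2) := by field_simp
    _ ≤ (2 * Real.pi * (eVariationOn g univ).toReal + 1) * b ^ k / (T * b ^ 2) := by
        gcongr
        exact le_add_of_nonneg_right zero_le_one

/-- **Riemann-sum kernel lemma, part (C).**
Let `W` be bounded, of bounded variation, even, supported in `[-1,1]`, and let `k ≥ 0`.
Then there is `C > 0` (depending only on `W, k`) such that for all `T ≥ 2`,
`b ∈ (0, π/2)`, `ω ∈ [0, 2π]`, and any admissible choice of grid points `u`: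
(i) if `k` is even,
    `(2π/T) ∑_{s<T} W_b(ω - u s)² (ω - u s)^k ≤ b^{k-1} ∫ W(α)² α^k dα + C/(T b²)`;
(ii) if `k` is odd,
    `|(2π/T) ∑_{s<T} W_b(ω - u s)² (ω - u s)^k| ≤ C/(T b²)`. -/
theorem kernel_riemann_sum_C (W : ℝ → ℝ) (k : ℕ)
    (hWbd : ∃ M, ∀ x, |W x| ≤ M)
    (hBV : BoundedVariationOn W Set.univ)
    (hWeven : ∀ x, W (-x) = W x)
    (hsupp : ∀ x : ℝ, 1 ≤ |x| → W x = 0) :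
    ∃ C > (0 : ℝ), ∀ T : ℕ, 2 ≤ T → ∀ b : ℝ, 0 < b → b < Real.pi / 2 →
      ∀ ω ∈ Set.Icc (0 : ℝ) (2 * Real.pi),
      ∀ u : ℕ → ℝ,
        (∀ s < T, (∃ m : ℤ, u s = 2 * Real.pi * s / T + 2 * (m : ℝ) * Real.pi) ∧
          |ω - u s| ≤ Real.pi) →
        (Even k →
          (2 * Real.pi / T) * ∑ s ∈ Finset.range T, (Wper W b (ω - u s)) ^ 2 * (ω - u s) ^ k ≤
            b ^ ((k : ℤ) - 1) * (∫ x, (W x) ^ 2 * x ^ k) + C / (T * b ^ 2)) ∧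
        (Odd k →
          |(2 * Real.pi / T) * ∑ s ∈ Finset.range T, (Wper W b (ω - u s)) ^ 2 * (ω - u s) ^ k| ≤
            C / (T * b ^ 2)) := by
  obtain ⟨C, hC, hgrid⟩ := kernel_riemann_sum_C_general W k hBV hsupp
  refine ⟨C * (Real.pi / 2) ^ k, by positivity, fun T hT b hb hbπ ω _ u hu ↦ ?_⟩
  have hbound := (hgrid T (by lia) b hb (by linarith) ω u hu).trans
    (show _ ≤ C * (Real.pi / 2) ^ k / (T * b ^ 2) by gcongr)
  refine ⟨fun _ ↦ by linarith [le_of_abs_le hbound], fun hk ↦ ?_⟩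
  simpa only [integral_sq_mul_pow_eq_zero_of_even_of_odd hWeven hk, mul_zero, sub_zero] using hbound
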